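/- arXiv:0905.2557 — 3 statements merged into one kernel-verified Lean document; each statement's English description precedes it below -/
import Mathlib

section
/- Jacobi–Trudy formula for generalized Schur polynomials: for every partition λ = (λ_1 ≥ … ≥ λ_l > 0) of length l ≤ n, one has S_λ(x_1,…,x_n|a,b) = det( h^{(j−1)}_{λ_i − i + 1} )_{1 ≤ i,j ≤ l}. -/
open Polynomial Matrix Finset

noncomputable section

variable {K L : Type*} [Field K] [Field L]

/-- The orthogonal-polynomial sequence: `φ₀ = 1`, `φ₁ = z - a 0`,
`φ_{i+1} = (z - a i)·φ_i - b i·φ_{i-1}` (so `φ_{-1} = 0`). -/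
def phi (a b : ℤ → K) : ℕ → Polynomial K
  | 0 => 1
  | 1 => Polynomial.X - Polynomial.C (a 0)
  | (i+2) => (Polynomial.X - Polynomial.C (a (i+1))) * phi a b (i+1)
      - Polynomial.C (b (i+1)) * phi a b i

/-- `φ` with integer index, `0` for negative index. -/
def phiZ (a b : ℤ → K) (m : ℤ) : Polynomial K :=
  if m < 0 then 0 else phi a b m.toNat

/-- Generalized Schur polynomial `S_λ(y₁,…,y_m|a,b)
  = det(φ_{λ_j+m-j}(y_i)) / ∏_{i<j}(y_i - y_j)` (indices here 0-based). -/
def genS (a b : ℤ → K) (c : K →+* L) {m : ℕ} (y : Fin m → L) (lam : Fin m → ℕ) : L :=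
  Matrix.det (Matrix.of fun i j : Fin m =>
      (phi a b (lam j + (m - 1 - (j : ℕ)))).eval₂ c (y i)) /
    ∏ i : Fin m, ∏ j ∈ Finset.Ioi i, (y i - y j)

/-- `h_i = S_{(i)}` for `i ≥ 0`, and `h_i = 0` for `i < 0`. -/
def genh (a b : ℤ → K) (c : K →+* L) {m : ℕ} (y : Fin m → L) (i : ℤ) : L :=
  if i < 0 then 0 else genS a b c y (fun j => if (j : ℕ) = 0 then i.toNat else 0)

/-- `h_i^{(0)} = h_i`, `h_i^{(r+1)} = h_{i+1}^{(r)} + a(i+m-1)h_i^{(r)} + b(i+m-1)h_{i-1}^{(r)}`. -/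
def genhr (a b : ℤ → K) (c : K →+* L) {m : ℕ} (y : Fin m → L) : ℕ → ℤ → L
  | 0, i => genh a b c y i
  | (r+1), i => genhr a b c y r (i+1) + c (a (i + m - 1)) * genhr a b c y r i
      + c (b (i + m - 1)) * genhr a b c y r (i-1)

/-- The field `F = K(x₁,…,x_n)`. -/
abbrev Fn (K : Type*) [Field K] (n : ℕ) := FractionRing (MvPolynomial (Fin n) K)

/-- The embedding `K → K(x₁,…,x_n)`. -/
def cK (K : Type*) [Field K] (n : ℕ) : K →+* Fn K n :=
  (algebraMap (MvPolynomial (Fin n) K) (Fn K n)).comp MvPolynomial.C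

/-- The variables `x₁,…,x_n` as elements of `K(x₁,…,x_n)`. -/
def xv (K : Type*) [Field K] (n : ℕ) (i : Fin n) : Fn K n :=
  algebraMap (MvPolynomial (Fin n) K) (Fn K n) (MvPolynomial.X i)

/-- The divided difference of a polynomial at the nodes `y`. -/
def dividedDiff {m : ℕ} (y : Fin m → L) (p : L[X]) : L :=
  ∑ i, p.eval (y i) / ∏ j ∈ univ.erase i, (y i - y j)

theorem dividedDiff_zero {m : ℕ} (y : Fin m → L) : dividedDiff y 0 = 0 := by
  simp [dividedDiff]

theorem dividedDiff_add {m : ℕ} (y : Fin m → L) (p q : L[X]) :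
    dividedDiff y (p + q) = dividedDiff y p + dividedDiff y q := by
  simp [dividedDiff, add_div, sum_add_distrib]

theorem dividedDiff_C_mul {m : ℕ} (y : Fin m → L) (t : L) (p : L[X]) :
    dividedDiff y (C t * p) = t * dividedDiff y p := by
  simp [dividedDiff, mul_sum, mul_div_assoc]

theorem dividedDiff_of_degree_lt {m : ℕ} {y : Fin m → L} (hy : Function.Injective y)
    {p : L[X]} (hp : p.degree < m) : dividedDiff y p = p.coeff (m - 1) := by
  have h := Lagrange.coeff_eq_sum (s := univ) (v := y) hy.injOn (P := p) (by simpa using hp)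
  simpa [dividedDiff] using h.symm

/-- The determinant of divided differences of `X ^ j * p i` is the alternant of the `p i`
divided by the Vandermonde product. -/
theorem det_dividedDiff_X_pow_mul {m : ℕ} {y : Fin m → L} (hy : Function.Injective y)
    (p : Fin m → L[X]) :
    det (of fun i j : Fin m => dividedDiff y (X ^ (j : ℕ) * p i)) =
      det (of fun i j : Fin m => (p j).eval (y i)) /
        ∏ i : Fin m, ∏ j ∈ Ioi i, (y i - y j) := by
  have hfactor : (of fun i j : Fin m => dividedDiff y (X ^ (j : ℕ) * p i)) =
      (of fun i j : Fin m => (p j).eval (y i))ᵀ *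
        diagonal (fun i => (∏ j ∈ univ.erase i, (y i - y j))⁻¹) * vandermonde y := by
    ext i j
    rw [mul_apply]
    simp only [of_apply, dividedDiff, mul_diagonal, transpose_apply, vandermonde_apply,
      eval_mul, eval_pow, eval_X]
    refine sum_congr rfl fun k _ => ?_
    ring
  have hoff : ∏ i : Fin m, ∏ j ∈ univ.erase i, (y i - y j) =
      det (vandermonde y) * ∏ i : Fin m, ∏ j ∈ Ioi i, (y i - y j) := by
    have h := prod_prod_Ioi_mul_eq_prod_prod_off_diag (fun i j : Fin m => y j - y i)
    simp only [prod_mul_distrib] at h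
    rw [det_vandermonde, mul_comm, h]
    refine prod_congr rfl fun i _ => prod_congr ?_ fun _ _ => rfl
    ext; simp
  have hV : det (vandermonde y) ≠ 0 := det_vandermonde_ne_zero_iff.mpr hy
  rw [hfactor, det_mul, det_mul, det_transpose, det_diagonal, prod_inv_distrib, hoff, mul_inv]
  field_simp

/-- If the last `m - l` rows of a square matrix vanish strictly below the diagonal and are `1` on
it, the determinant is that of the leading `l × l` minor. -/
theorem det_eq_det_leading_of_unitriangular {R : Type*} [CommRing R] {m l : ℕ} (hl : l ≤ m)
    (M : Matrix (Fin m) (Fin m) R)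
    (hlow : ∀ i j : Fin m, l ≤ (i : ℕ) → j < i → M i j = 0)
    (hdiag : ∀ i : Fin m, l ≤ (i : ℕ) → M i i = 1) :
    M.det = (M.submatrix (Fin.castLE hl) (Fin.castLE hl)).det := by
  obtain ⟨k, rfl⟩ := Nat.exists_eq_add_of_le hl
  rw [← det_submatrix_equiv_self finSumFinEquiv M]
  have hblocks : M.submatrix finSumFinEquiv finSumFinEquiv =
      fromBlocks (M.submatrix (Fin.castAdd k) (Fin.castAdd k))
        (M.submatrix (Fin.castAdd k) (Fin.natAdd l)) 0
        (M.submatrix (Fin.natAdd l) (Fin.natAdd l)) := by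
    ext (i | i) (j | j)
    · simp
    · simp
    · simpa using hlow (Fin.natAdd l i) (Fin.castAdd k j) (by simp)
        (by simp [Fin.lt_def]; omega)
    · simp
  have hunit : (M.submatrix (Fin.natAdd l) (Fin.natAdd l)).det = 1 := by
    rw [det_of_isUpperTriangular]
    · exact prod_eq_one fun i _ => hdiag _ (by simp)
    · intro i j hij
      exact hlow _ _ (by simp) (Nat.add_lt_add_left hij l)
  rw [hblocks, det_fromBlocks_zero₂₁, hunit, mul_one]
  rfl

theorem phi_monic_natDegree (a b : ℤ → K) :
    ∀ k : ℕ, (phi a b k).Monic ∧ (phi a b k).natDegree = k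
  | 0 => by simp [phi]
  | 1 => by simp [phi, monic_X_sub_C]
  | k + 2 => by
    obtain ⟨hm₁, hd₁⟩ := phi_monic_natDegree a b (k + 1)
    obtain ⟨hm₀, hd₀⟩ := phi_monic_natDegree a b k
    have hm : ((X - C (a (k + 1))) * phi a b (k + 1)).Monic := (monic_X_sub_C _).mul hm₁
    have hd : ((X - C (a (k + 1))) * phi a b (k + 1)).natDegree = k + 2 := by
      rw [(monic_X_sub_C _).natDegree_mul hm₁, natDegree_X_sub_C, hd₁]; ring
    have hlt : (C (b (k + 1)) * phi a b k).natDegree <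
        ((X - C (a (k + 1))) * phi a b (k + 1)).natDegree := by
      have := natDegree_C_mul_le (b (k + 1)) (phi a b k)
      omega
    rw [phi]
    refine ⟨hm.sub_of_left (degree_lt_degree hlt), ?_⟩
    rw [natDegree_sub_eq_left_of_natDegree_lt hlt, hd]

/-- The three-term recurrence, solved for multiplication by `X`. -/
theorem X_mul_phiZ (a b : ℤ → K) {k : ℤ} (hk : 0 ≤ k) :
    X * phiZ a b k =
      phiZ a b (k + 1) + C (a k) * phiZ a b k + C (b k) * phiZ a b (k - 1) := by
  obtain ⟨k, rfl⟩ := Int.eq_ofNat_of_zero_le hk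
  cases k with
  | zero => simp [phiZ, phi]
  | succ k =>
    have h₀ : ((k + 1 : ℕ) : ℤ) - 1 = (k : ℕ) := by push_cast; ring
    have h₁ : ((k + 1 : ℕ) : ℤ) + 1 = (k + 2 : ℕ) := by push_cast; ring
    have hnat (j : ℕ) : phiZ a b (j : ℤ) = phi a b j := by simp [phiZ]
    rw [h₀, h₁, hnat, hnat, hnat, phi]
    push_cast
    ring

theorem dividedDiff_X_pow_mul_phi (a b : ℤ → K) (c : K →+* L) {m : ℕ} {y : Fin m → L}
    (hy : Function.Injective y) {r k : ℕ} (hrk : r + k < m) :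
    dividedDiff y (X ^ r * (phi a b k).map c) = if r + k = m - 1 then 1 else 0 := by
  obtain ⟨hm, hd⟩ := phi_monic_natDegree a b k
  have hmonic : (X ^ r * (phi a b k).map c).Monic := (monic_X_pow r).mul (hm.map c)
  have hdeg : (X ^ r * (phi a b k).map c).natDegree = r + k := by
    rw [(monic_X_pow r).natDegree_mul (hm.map c), natDegree_X_pow, hm.natDegree_map, hd]
  rw [dividedDiff_of_degree_lt hy ((natDegree_lt_iff_degree_lt hmonic.ne_zero).mp (by omega))]
  split_ifs with h
  · rw [← h, ← hdeg]; exact hmonic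
  · exact coeff_eq_zero_of_natDegree_lt (by omega)

theorem genS_eq_det_dividedDiff (a b : ℤ → K) (c : K →+* L) {m l : ℕ} {y : Fin m → L}
    (hy : Function.Injective y) (hl : l ≤ m) (lam : Fin m → ℕ)
    (hzero : ∀ i : Fin m, l ≤ (i : ℕ) → lam i = 0) :
    genS a b c y lam = det (of fun i j : Fin l => dividedDiff y (X ^ (j : ℕ) *
      (phi a b (lam (Fin.castLE hl i) + (m - 1 - (i : ℕ)))).map c)) := by
  have h := det_dividedDiff_X_pow_mul hy
    (fun i : Fin m => (phi a b (lam i + (m - 1 - (i : ℕ)))).map c)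
  simp only [eval_map] at h
  rw [genS, ← h, det_eq_det_leading_of_unitriangular hl]
  · rfl
  · intro i j hi hij
    have hij : (j : ℕ) < i := hij
    rw [of_apply, hzero i hi, dividedDiff_X_pow_mul_phi a b c hy (by omega), if_neg (by omega)]
  · intro i hi
    rw [of_apply, hzero i hi, dividedDiff_X_pow_mul_phi a b c hy (by omega), if_pos (by omega)]

theorem genh_eq_dividedDiff (a b : ℤ → K) (c : K →+* L) {m : ℕ} {y : Fin m → L}
    (hm : 1 ≤ m) (hy : Function.Injective y) (i : ℤ) :
    genh a b c y i = dividedDiff y ((phiZ a b (i + m - 1)).map c) := by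
  rw [genh]
  split_ifs with hi
  · rw [phiZ]
    split_ifs with hk
    · rw [Polynomial.map_zero, dividedDiff_zero]
    · have h := dividedDiff_X_pow_mul_phi a b c hy (r := 0) (k := (i + m - 1).toNat) (by omega)
      rw [pow_zero, one_mul] at h
      rw [h, if_neg (by omega)]
  · rw [genS_eq_det_dividedDiff a b c hy hm _ fun j hj => if_neg (by omega), det_fin_one]
    have hk : (i + m - 1).toNat = i.toNat + (m - 1) := by omega
    simp [phiZ, hk, show ¬ i + m - 1 < 0 by omega]

theorem genhr_eq_zero (a b : ℤ → K) (c : K →+* L) {m : ℕ} (y : Fin m → L) (r : ℕ) (i : ℤ)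
    (hi : i < -r) : genhr a b c y r i = 0 := by
  induction r generalizing i with
  | zero => simp only [genhr, genh]; exact if_pos (by simpa using hi)
  | succ r ih =>
    push_cast at hi
    simp [genhr, ih (i + 1) (by omega), ih i (by omega), ih (i - 1) (by omega)]

theorem genhr_eq_dividedDiff (a b : ℤ → K) (c : K →+* L) {m : ℕ} {y : Fin m → L}
    (hm : 1 ≤ m) (hy : Function.Injective y) (r : ℕ) (hr : r ≤ m) (i : ℤ)
    (hi : 0 ≤ i + m - 1) :
    genhr a b c y r i = dividedDiff y (X ^ r * (phiZ a b (i + m - 1)).map c) := by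
  induction r generalizing i with
  | zero => rw [pow_zero, one_mul, genhr, genh_eq_dividedDiff a b c hm hy]
  | succ r ih =>
    have hlast : genhr a b c y r (i - 1) =
        dividedDiff y (X ^ r * (phiZ a b (i + m - 1 - 1)).map c) := by
      by_cases hi' : 0 ≤ i - 1 + m - 1
      · rw [ih (by omega) _ hi', show i - 1 + m - 1 = i + m - 1 - 1 by ring]
      · rw [genhr_eq_zero a b c y r _ (by omega), phiZ, if_pos (by omega), Polynomial.map_zero,
          mul_zero, dividedDiff_zero]
    have hX := congrArg (Polynomial.map c) (X_mul_phiZ a b hi)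
    simp only [Polynomial.map_mul, Polynomial.map_add, map_X, map_C] at hX
    rw [genhr, hlast, ih (by omega) i hi, ih (by omega) (i + 1) (by omega), pow_succ, mul_assoc,
      hX, ← dividedDiff_C_mul, ← dividedDiff_C_mul, ← dividedDiff_add, ← dividedDiff_add,
      show i + 1 + m - 1 = i + m - 1 + 1 by ring]
    congr 1
    ring

theorem xv_injective (K : Type*) [Field K] (n : ℕ) : Function.Injective (xv K n) :=
  (IsFractionRing.injective (MvPolynomial (Fin n) K) (Fn K n)).comp
    MvPolynomial.X_injective

/-- **Jacobi–Trudy formula for generalized Schur polynomials.**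
For a partition `λ = (λ_1 ≥ … ≥ λ_l > 0)` of length `l ≤ n` (encoded 0-based as
`lam : Fin n → ℕ`), one has `S_λ(x|a,b) = det( h^{(j-1)}_{λ_i - i + 1} )_{1 ≤ i,j ≤ l}`. -/
theorem generalized_jacobi_trudy (K : Type*) [Field K] (a b : ℤ → K) (n l : ℕ)
    (hn : 1 ≤ n) (hl : l ≤ n) (lam : Fin n → ℕ) (hanti : Antitone lam)
    (hpos : ∀ i : Fin n, (i : ℕ) < l → 0 < lam i)
    (hzero : ∀ i : Fin n, l ≤ (i : ℕ) → lam i = 0) :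
    genS a b (cK K n) (xv K n) lam =
      Matrix.det (Matrix.of fun i j : Fin l =>
        genhr a b (cK K n) (xv K n) (j : ℕ)
          ((lam (Fin.castLE hl i) : ℤ) - (i : ℕ))) := by
  rw [genS_eq_det_dividedDiff a b _ (xv_injective K n) hl lam hzero]
  congr 1
  ext i j
  rw [of_apply, of_apply,
    genhr_eq_dividedDiff a b _ hn (xv_injective K n) _ (by omega) _ (by omega), phiZ,
    if_neg (by omega)]
  congr 4
  omega
end
end

section
/- For every partition λ of length l (λ_1 ≥ … ≥ λ_l > 0), with conjugate λ′ and number of diagonal boxes r = #{i : λ_i ≥ i}, the following identity holds in the ring of Laurent polynomials ℤ[t, t^{−1}]: Σ_{i=1}^{l} t^{i}(1 − t^{−λ_i}) = Σ_{j=1}^{r} ( t^{λ′_j − j + 1} − t^{j − λ_j} ). -/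
open LaurentPolynomial

/-- A downward closed subset of `{1, …, l}` is an initial segment. -/
theorem filter_Icc_one_eq_Icc_card (p : ℕ → Prop) [DecidablePred p] (l : ℕ)
    (hp : ∀ i j : ℕ, 1 ≤ i → i ≤ j → j ≤ l → p j → p i) :
    (Finset.Icc 1 l).filter p = Finset.Icc 1 ((Finset.Icc 1 l).filter p).card := by
  induction l with
  | zero => simp
  | succ l ih =>
    by_cases h : p (l + 1)
    · have hall : (Finset.Icc 1 (l + 1)).filter p = Finset.Icc 1 (l + 1) := by
        refine Finset.filter_true_of_mem fun i hi => ?_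
        rw [Finset.mem_Icc] at hi
        exact hp i (l + 1) hi.1 hi.2 le_rfl h
      rw [hall, Nat.card_Icc, Nat.add_sub_cancel]
    · rw [← Finset.insert_Icc_right_eq_Icc_add_one (by omega), Finset.filter_insert, if_neg h]
      exact ih fun i j hi hij hj => hp i j hi hij (by omega)

/-- The sum of `t ^ (a + 1 - j) - t ^ (a - j)` over `1 ≤ j ≤ min l m` telescopes. -/
theorem sum_ite_T_sub_T (a : ℤ) (m l : ℕ) :
    ∑ j ∈ Finset.Icc 1 l,
        (if j ≤ m then (T (a + 1 - (j : ℤ)) - T (a - (j : ℤ)) : LaurentPolynomial ℤ) else 0)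
      = T a - T (a - (min l m : ℕ)) := by
  induction l with
  | zero => simp
  | succ l ih =>
    rw [Finset.sum_Icc_succ_top (by omega), ih]
    split_ifs with h
    · rw [min_eq_left h, min_eq_left (by omega)]
      push_cast
      rw [show a + 1 - ((l : ℤ) + 1) = a - l by ring]
      ring
    · rw [min_eq_right (by omega), min_eq_right (by omega), add_zero]

/-- The Frobenius identity, with the sum over diagonal boxes written as a conditional sum over
all rows. -/
theorem sum_T_mul_one_sub_T_eq_sum_ite (l : ℕ) (lam : ℕ → ℕ)
    (hanti : ∀ i j : ℕ, 1 ≤ i → i ≤ j → j ≤ l → lam j ≤ lam i) :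
    ∑ i ∈ Finset.Icc 1 l, (T (i : ℤ) * (1 - T (-(lam i : ℤ))) : LaurentPolynomial ℤ)
      = ∑ j ∈ Finset.Icc 1 l, if j ≤ lam j then
          (T ((((Finset.Icc 1 l).filter fun i => j ≤ lam i).card : ℤ) - (j : ℤ) + 1)
            - T ((j : ℤ) - (lam j : ℤ)) : LaurentPolynomial ℤ) else 0 := by
  induction l with
  | zero => simp
  | succ l ih =>
    have hfull (k j : ℕ) (hk : k ≤ l + 1) (hj : j ≤ lam (l + 1)) :
        ((Finset.Icc 1 k).filter fun i => j ≤ lam i).card = k := by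
      rw [Finset.filter_true_of_mem, Nat.card_Icc, Nat.add_sub_cancel]
      intro i hi
      rw [Finset.mem_Icc] at hi
      exact hj.trans (hanti i (l + 1) hi.1 (by omega) le_rfl)
    have hstep : ∀ j ∈ Finset.Icc 1 l,
        (if j ≤ lam j then
          (T ((((Finset.Icc 1 (l + 1)).filter fun i => j ≤ lam i).card : ℤ) - (j : ℤ) + 1)
            - T ((j : ℤ) - (lam j : ℤ)) : LaurentPolynomial ℤ) else 0)
        = (if j ≤ lam j then
          (T ((((Finset.Icc 1 l).filter fun i => j ≤ lam i).card : ℤ) - (j : ℤ) + 1)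
            - T ((j : ℤ) - (lam j : ℤ)) : LaurentPolynomial ℤ) else 0)
          + if j ≤ lam (l + 1) then
            (T ((l + 1 : ℤ) + 1 - (j : ℤ)) - T ((l + 1 : ℤ) - (j : ℤ))) else 0 := by
      intro j hj
      rw [Finset.mem_Icc] at hj
      by_cases h : j ≤ lam (l + 1)
      · have hjj : j ≤ lam j := h.trans (hanti j (l + 1) hj.1 (by omega) le_rfl)
        rw [if_pos hjj, if_pos hjj, if_pos h, hfull _ j le_rfl h, hfull l j (by omega) h]
        push_cast
        rw [show (l : ℤ) + 1 - j + 1 = l + 1 + 1 - j by ring,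
          show (l : ℤ) - j + 1 = l + 1 - j by ring]
        ring
      · rw [if_neg h, add_zero, ← Finset.insert_Icc_right_eq_Icc_add_one (by omega),
          Finset.filter_insert, if_neg h]
    rw [Finset.sum_Icc_succ_top (by omega), Finset.sum_Icc_succ_top (by omega),
      Finset.sum_congr rfl hstep, Finset.sum_add_distrib, sum_ite_T_sub_T,
      ih fun i j hi hij hj => hanti i j hi hij (by omega), add_assoc]
    congr 1
    rw [mul_sub, mul_one, ← T_add]
    by_cases h : l + 1 ≤ lam (l + 1)
    · rw [if_pos h, hfull _ _ le_rfl h, min_eq_left (by omega)]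
      push_cast
      rw [show (l : ℤ) + 1 - l = 1 by ring, show (l : ℤ) + 1 - (l + 1) + 1 = 1 by ring,
        ← sub_eq_add_neg]
      ring
    · rw [if_neg h, min_eq_right (by omega), add_zero, ← sub_eq_add_neg]
      push_cast
      rfl

/-- For a partition `λ_1 ≥ … ≥ λ_l > 0` (1-indexed via `lam`), with conjugate
`λ'_j = #{i : λ_i ≥ j}` and `r = #{i : λ_i ≥ i}` diagonal boxes, one has in `ℤ[t,t⁻¹]`:
`Σ_{i=1}^{l} t^i (1 - t^{-λ_i}) = Σ_{j=1}^{r} ( t^{λ'_j - j + 1} - t^{j - λ_j} )`. -/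
theorem frobenius_laurent_identity (l : ℕ) (lam : ℕ → ℕ)
    (hanti : ∀ i j : ℕ, 1 ≤ i → i ≤ j → j ≤ l → lam j ≤ lam i)
    (hpos : ∀ i : ℕ, 1 ≤ i → i ≤ l → 0 < lam i) :
    let conj : ℕ → ℕ := fun j => ((Finset.Icc 1 l).filter fun i => j ≤ lam i).card
    let r : ℕ := ((Finset.Icc 1 l).filter fun i => i ≤ lam i).card
    ∑ i ∈ Finset.Icc 1 l,
        (T (i : ℤ) * (1 - T (-(lam i : ℤ))) : LaurentPolynomial ℤ)
      = ∑ j ∈ Finset.Icc 1 r,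
          ((T ((conj j : ℤ) - (j : ℤ) + 1) - T ((j : ℤ) - (lam j : ℤ))) :
            LaurentPolynomial ℤ) := by
  intro conj r
  have hdiag : (Finset.Icc 1 l).filter (fun i => i ≤ lam i) = Finset.Icc 1 r :=
    filter_Icc_one_eq_Icc_card _ l fun i j hi hij hj h =>
      hij.trans (h.trans (hanti i j hi hij hj))
  rw [← hdiag, Finset.sum_filter]
  exact sum_T_mul_one_sub_T_eq_sum_ite l lam hanti
end

section
/- Classical Jacobi–Trudy formula: for every partition λ of length l ≤ n, the following identity holds in ℤ[x_1,…,x_n]: det( x_i^{λ_j + n − j} )_{1 ≤ i,j ≤ n} = ( ∏_{i<j} (x_i − x_j) ) · det( h_{λ_i − i + j} )_{1 ≤ i,j ≤ l}, where h_k = h_k(x_1,…,x_n) is the complete homogeneous symmetric polynomial of degree k in x_1,…,x_n for k ≥ 0, and h_k = 0 for k < 0. -/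
/-- Complete homogeneous symmetric polynomial with integer index: `0` for negative index. -/
noncomputable def hZ (n : ℕ) (k : ℤ) : MvPolynomial (Fin n) ℤ :=
  if k < 0 then 0 else MvPolynomial.hsymm (Fin n) ℤ k.toNat

open MvPolynomial in
/-- The generating function of the complete homogeneous symmetric polynomials is the product of
the geometric series of the variables. -/
theorem mk_hsymm_eq_prod (σ R : Type*) [Fintype σ] [DecidableEq σ] [CommRing R] :
    PowerSeries.mk (hsymm σ R) =
      ∏ i : σ, PowerSeries.mk fun k => (X i : MvPolynomial σ R) ^ k := by
  ext1 d
  simp only [PowerSeries.coeff_prod, PowerSeries.coeff_mk, hsymm]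
  refine Finset.sum_bij (fun s _ => Multiset.toFinsupp s.1) ?_ ?_ ?_ ?_
  · intro s _
    rw [Finset.mem_finsuppAntidiag]
    refine ⟨?_, Finset.subset_univ _⟩
    exact (Multiset.sum_count_eq_card fun i _ => Finset.mem_univ i).trans s.2
  · intro s _ t _ h
    exact Subtype.ext (Multiset.toFinsupp.injective h)
  · intro f hf
    rw [Finset.mem_finsuppAntidiag] at hf
    refine ⟨⟨Finsupp.toMultiset f, ?_⟩, Finset.mem_univ _, by simp⟩
    rw [Finsupp.card_toMultiset, Finsupp.sum_fintype _ _ (by simp)]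
    exact hf.1
  · intro s _
    rw [Finset.prod_multiset_map_count]
    refine Finset.prod_subset (Finset.subset_univ _) fun i _ hi => ?_
    rw [Multiset.count_eq_zero.2 fun h => hi (Multiset.mem_toFinset.2 h), pow_zero]

/-- The geometric series with ratio `a` is inverse to `1 - a X`. -/
theorem one_sub_C_mul_X_mul_mk_pow {R : Type*} [CommRing R] (a : R) :
    (1 - PowerSeries.C a * PowerSeries.X) * PowerSeries.mk (fun k => a ^ k) = 1 := by
  ext k
  rw [sub_mul, one_mul, mul_assoc, map_sub, PowerSeries.coeff_C_mul]
  cases k with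
  | zero => simp
  | succ k => simp [PowerSeries.coeff_succ_X_mul, PowerSeries.coeff_one, pow_succ']

/-- The generating polynomial `∏_{j ≠ i} (1 - x_j t)` of the signed elementary symmetric
polynomials in all variables except `x_i`. -/
noncomputable def elemGenErase {n : ℕ} (i : Fin n) : Polynomial (MvPolynomial (Fin n) ℤ) :=
  ∏ j ∈ Finset.univ.erase i, (1 - Polynomial.C (MvPolynomial.X j) * Polynomial.X)

theorem natDegree_elemGenErase_lt {n : ℕ} (i : Fin n) : (elemGenErase i).natDegree < n := by
  have hle : (elemGenErase i).natDegree ≤ ∑ _j ∈ Finset.univ.erase i, 1 :=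
    (Polynomial.natDegree_prod_le _ _).trans (Finset.sum_le_sum fun j _ => by
      compute_degree)
  have hn : 0 < n := i.pos
  simp at hle
  omega

theorem elemGenErase_mul_mk_hsymm {n : ℕ} (i : Fin n) :
    (elemGenErase i : PowerSeries (MvPolynomial (Fin n) ℤ)) *
        PowerSeries.mk (MvPolynomial.hsymm (Fin n) ℤ) =
      PowerSeries.mk fun k => MvPolynomial.X i ^ k := by
  have hcoe : (elemGenErase i : PowerSeries (MvPolynomial (Fin n) ℤ)) =
      ∏ j ∈ Finset.univ.erase i,
        (1 - PowerSeries.C (MvPolynomial.X j) * PowerSeries.X) := by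
    rw [elemGenErase, ← Polynomial.coeToPowerSeries.ringHom_apply, map_prod]
    simp
  rw [hcoe, mk_hsymm_eq_prod, ← Finset.mul_prod_erase _ _ (Finset.mem_univ i), mul_left_comm,
    ← Finset.prod_mul_distrib]
  simp [one_sub_C_mul_X_mul_mk_pow]

theorem sum_coeff_elemGenErase_mul_hZ {n : ℕ} (i : Fin n) (m : ℕ) :
    ∑ k : Fin n, (elemGenErase i).coeff k * hZ n ((m : ℤ) - (k : ℕ)) =
      MvPolynomial.X i ^ m := by
  have hcoeff := congrArg (PowerSeries.coeff m) (elemGenErase_mul_mk_hsymm i)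
  rw [PowerSeries.coeff_mul, PowerSeries.coeff_mk,
    Finset.Nat.sum_antidiagonal_eq_sum_range_succ_mk] at hcoeff
  rw [← hcoeff, Fin.sum_univ_eq_sum_range
    (fun k => (elemGenErase i).coeff k * hZ n ((m : ℤ) - (k : ℕ)))]
  have hn : Finset.range n ⊆ Finset.range (n + (m + 1)) := by simp
  have hm : Finset.range (m + 1) ⊆ Finset.range (n + (m + 1)) := by simp
  rw [Finset.sum_subset hn, ← Finset.sum_subset hm]
  · refine Finset.sum_congr rfl fun k hk => ?_
    have hk : k ≤ m := by simpa [Nat.lt_succ_iff] using hk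
    rw [hZ, if_neg (by omega), Polynomial.coeff_coe, PowerSeries.coeff_mk]
    congr 2
    omega
  · intro k _ hk
    rw [hZ, if_pos (by simp at hk; omega), mul_zero]
  · intro k _ hk
    rw [Polynomial.coeff_eq_zero_of_natDegree_lt, zero_mul]
    have := natDegree_elemGenErase_lt i
    simp at hk
    omega

/-- If the rows of a square matrix from the `l`-th on are upper unitriangular, its determinant is
its leading principal minor of size `l`. -/
theorem Matrix.det_eq_det_submatrix_castLE {R : Type*} [CommRing R] {n l : ℕ} (hl : l ≤ n)
    (M : Matrix (Fin n) (Fin n) R)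
    (hlower : ∀ i j : Fin n, l ≤ (i : ℕ) → j < i → M i j = 0)
    (hdiag : ∀ i : Fin n, l ≤ (i : ℕ) → M i i = 1) :
    M.det = (M.submatrix (Fin.castLE hl) (Fin.castLE hl)).det := by
  obtain ⟨m, rfl⟩ := Nat.exists_eq_add_of_le hl
  rw [← Matrix.det_submatrix_equiv_self finSumFinEquiv,
    ← Matrix.fromBlocks_toBlocks (M.submatrix finSumFinEquiv finSumFinEquiv)]
  have h21 : (M.submatrix finSumFinEquiv finSumFinEquiv).toBlocks₂₁ = 0 := by
    ext i j
    exact hlower _ _ (by simp) (by simp [Fin.lt_def]; omega)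
  have h22 : (M.submatrix finSumFinEquiv finSumFinEquiv).toBlocks₂₂.det = 1 := by
    rw [Matrix.det_of_isUpperTriangular]
    · exact Finset.prod_eq_one fun i _ => hdiag _ (by simp)
    · intro i j hij
      exact hlower _ _ (by simp) ((Fin.natAdd_lt_natAdd_iff l).2 hij)
  rw [h21, Matrix.det_fromBlocks_zero₂₁, h22, mul_one]
  rfl

/-- The alternant with exponents `μ_j + n - 1 - j` factors through the matrix of complete
homogeneous symmetric polynomials. -/
theorem alternant_eq_mul {n : ℕ} (μ : Fin n → ℕ) :
    (Matrix.of fun i j : Fin n =>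
        (MvPolynomial.X i : MvPolynomial (Fin n) ℤ) ^ (μ j + (n - 1 - (j : ℕ)))) =
      (Matrix.of fun i k : Fin n => (elemGenErase i).coeff k.rev) *
        (Matrix.of fun i j : Fin n => hZ n ((μ i : ℤ) - (i : ℕ) + (j : ℕ))).transpose := by
  ext1 i j
  simp only [Matrix.mul_apply, Matrix.of_apply, Matrix.transpose_apply]
  rw [← sum_coeff_elemGenErase_mul_hZ, ← Equiv.sum_comp Fin.revPerm]
  refine Finset.sum_congr rfl fun k _ => ?_
  rw [Fin.revPerm_apply]
  congr 2
  rw [Fin.val_rev]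
  omega

/-- The matrix of complete homogeneous symmetric polynomials attached to `μ` has the same
determinant as its leading block of size `l` when `μ` vanishes from index `l` on. -/
theorem det_hZ_eq_det_castLE {n l : ℕ} (hl : l ≤ n) (μ : Fin n → ℕ)
    (hzero : ∀ i : Fin n, l ≤ (i : ℕ) → μ i = 0) :
    (Matrix.of fun i j : Fin n => hZ n ((μ i : ℤ) - (i : ℕ) + (j : ℕ))).det =
      (Matrix.of fun i j : Fin l =>
        hZ n ((μ (Fin.castLE hl i) : ℤ) - (i : ℕ) + (j : ℕ))).det := by
  rw [Matrix.det_eq_det_submatrix_castLE hl]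
  · rfl
  · intro i j hi hji
    rw [Matrix.of_apply, hzero i hi, hZ, if_pos (by have := Fin.lt_def.1 hji; omega)]
  · intro i hi
    simp [hzero i hi, hZ]

theorem det_coeff_elemGenErase (n : ℕ) :
    (Matrix.of fun i k : Fin n => (elemGenErase i).coeff k.rev).det =
      ∏ i : Fin n, ∏ j ∈ Finset.Ioi i, (MvPolynomial.X i - MvPolynomial.X j) := by
  have hdet := congrArg Matrix.det (alternant_eq_mul (n := n) 0)
  rw [Matrix.det_mul, Matrix.det_transpose,
    det_hZ_eq_det_castLE (Nat.zero_le n) 0 (fun _ _ => rfl), Matrix.det_fin_zero, mul_one] at hdet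
  rw [← hdet]
  have hvand := Matrix.det_projVandermonde (1 : Fin n → MvPolynomial (Fin n) ℤ) MvPolynomial.X
  simp only [Pi.one_apply, one_mul] at hvand
  rw [← hvand]
  congr 1
  ext1 i j
  rw [Matrix.projVandermonde_apply, Matrix.of_apply, Fin.val_rev]
  simp [Nat.sub_sub, Nat.add_comm]

/-- **Classical Jacobi–Trudy formula.** For a partition `λ` of length `l ≤ n`,
`det(x_i^{λ_j+n-j}) = ∏_{i<j}(x_i - x_j) · det(h_{λ_i-i+j})_{1≤i,j≤l}`. -/
theorem classical_jacobi_trudy (n l : ℕ) (hl : l ≤ n) (lam : Fin n → ℕ)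
    (hanti : Antitone lam) (hpos : ∀ i : Fin n, (i : ℕ) < l → 0 < lam i)
    (hzero : ∀ i : Fin n, l ≤ (i : ℕ) → lam i = 0) :
    Matrix.det (Matrix.of fun i j : Fin n =>
        (MvPolynomial.X i : MvPolynomial (Fin n) ℤ) ^ (lam j + (n - 1 - (j : ℕ)))) =
      (∏ i : Fin n, ∏ j ∈ Finset.Ioi i, (MvPolynomial.X i - MvPolynomial.X j)) *
        Matrix.det (Matrix.of fun i j : Fin l =>
          hZ n ((lam (Fin.castLE hl i) : ℤ) - (i : ℕ) + (j : ℕ))) := by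
  rw [alternant_eq_mul, Matrix.det_mul, Matrix.det_transpose, det_coeff_elemGenErase,
    det_hZ_eq_det_castLE hl lam hzero]
end
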